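/- arXiv:2404.05740 — 3 statements merged into one kernel-verified Lean document; each statement's English description precedes it below -/
import Mathlib

section
/- Let (X,d) be a metric space with at least 3 points, let F,G : ℝ≥0 × ℝ≥0 × ℝ≥0 → ℝ≥0 satisfy the (F,G)-conditions and be continuous, and let T : X → X be an (F,G)-contracting mapping with constant α ∈ [0,1). Suppose additionally that there exists k > 0 with G(ξ,ξ,0) ≤ k·ξ for all ξ ∈ ℝ≥0 and α·k < 1. If x ∈ X is an accumulation point of X, then d(Tx,Ty) ≤ α·k·d(x,y) for all y ∈ X. -/
open scoped NNReal

/-!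
Fix `y ≠ x` and let a third point `z`, distinct from both, tend to the accumulation point `x`.
The triple `(d(x,y), d(y,z), d(x,z))` then tends to `(d(x,y), d(x,y), 0)`, while the contraction
inequality bounds `d(Tx,Ty)` by `α G(d(x,y), d(y,z), d(x,z))` for every such `z`. By continuity
of `G`, `d(Tx,Ty) ≤ α G(d(x,y), d(x,y), 0) ≤ α k d(x,y)`.
-/

open Filter Set Topology

/-- `T` is an `(F, G)`-contracting map with constant `α`: the `F`-size of the image of a triangle is
at most `α` times the `G`-size of the triangle. The requirement `α < 1` is not part of the
definition, and source and target may be different spaces. -/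
def IsFGContracting {X Y : Type*} [PseudoMetricSpace X] [PseudoMetricSpace Y]
    (F G : ℝ≥0 × ℝ≥0 × ℝ≥0 → ℝ≥0) (α : ℝ≥0) (T : X → Y) : Prop :=
  ∀ x y z : X, x ≠ y → y ≠ z → x ≠ z →
    F (nndist (T x) (T y), nndist (T y) (T z), nndist (T x) (T z)) ≤
      α * G (nndist x y, nndist y z, nndist x z)

section

variable {X : Type*} [PseudoMetricSpace X] {x : X}

theorem neBot_nhds_inf_cofinite_iff_infinite_ball :
    (𝓝 x ⊓ cofinite).NeBot ↔ ∀ ε : ℝ, 0 < ε → (Metric.ball x ε).Infinite := by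
  rw [Metric.nhds_basis_ball.inf_neBot_iff]
  refine forall₂_congr fun ε _ => ⟨fun h hfin => ?_, fun h s hs => ?_⟩
  · simpa using h hfin.compl_mem_cofinite
  · simpa only [sdiff_compl] using (h.sdiff hs).nonempty

theorem tendsto_nndist_triple_nhds (x y : X) :
    Tendsto (fun z => (nndist x y, nndist y z, nndist x z)) (𝓝 x)
      (𝓝 (nndist x y, nndist x y, 0)) := by
  have hcont : Continuous fun z => (nndist x y, nndist y z, nndist x z) := by fun_prop
  simpa only [nndist_comm y x, nndist_self] using hcont.tendsto x

theorem le_apply_nndist_nndist_zero_of_forall_ne {R : Type*} [TopologicalSpace R] [Preorder R]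
    [ClosedIciTopology R] {y : X} {Φ : ℝ≥0 × ℝ≥0 × ℝ≥0 → R} {c : R}
    (hx : (𝓝 x ⊓ cofinite).NeBot) (hΦ : ContinuousAt Φ (nndist x y, nndist x y, 0))
    (hc : ∀ z, x ≠ z → y ≠ z → c ≤ Φ (nndist x y, nndist y z, nndist x z)) :
    c ≤ Φ (nndist x y, nndist x y, 0) := by
  have hlim := (hΦ.tendsto.comp (tendsto_nndist_triple_nhds x y)).mono_left
    (inf_le_left : 𝓝 x ⊓ cofinite ≤ 𝓝 x)
  have hne (w : X) : ∀ᶠ z in 𝓝 x ⊓ cofinite, w ≠ z :=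
    ((finite_singleton w).eventually_cofinite_notMem.filter_mono inf_le_right).mono
      fun _ hz => Ne.symm hz
  refine ge_of_tendsto hlim ?_
  filter_upwards [hne x, hne y] with z hxz hyz using hc z hxz hyz

end

theorem stmt5_general {X Y : Type*} [PseudoMetricSpace X] [PseudoMetricSpace Y]
    {F G : ℝ≥0 × ℝ≥0 × ℝ≥0 → ℝ≥0} {T : X → Y} {α k : ℝ≥0} {x : X}
    (hF : ∀ ξ η ζ : ℝ≥0, ξ ≤ F (ξ, η, ζ))
    (hG : ∀ ξ : ℝ≥0, ContinuousAt G (ξ, ξ, 0))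
    (hk : ∀ ξ : ℝ≥0, G (ξ, ξ, 0) ≤ k * ξ)
    (hT : IsFGContracting F G α T)
    (hacc : ∀ ε : ℝ, 0 < ε → (Metric.ball x ε).Infinite) (y : X) :
    nndist (T x) (T y) ≤ α * k * nndist x y := by
  rcases eq_or_ne x y with rfl | hxy
  · simp
  calc nndist (T x) (T y)
      ≤ α * G (nndist x y, nndist x y, 0) :=
        le_apply_nndist_nndist_zero_of_forall_ne (Φ := fun p => α * G p)
          (neBot_nhds_inf_cofinite_iff_infinite_ball.2 hacc) (continuousAt_const.mul (hG _))
          fun z hxz hyz => (hF _ _ _).trans (hT x y z hxy hyz hxz)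
    _ ≤ α * (k * nndist x y) := by gcongr; exact hk _
    _ = α * k * nndist x y := (mul_assoc _ _ _).symm

theorem stmt5 {X : Type*} [MetricSpace X]
    (hX : ∃ x y z : X, x ≠ y ∧ y ≠ z ∧ x ≠ z)
    (F G : ℝ≥0 × ℝ≥0 × ℝ≥0 → ℝ≥0)
    (hFperm : ∀ ξ η ζ : ℝ≥0, F (η, ξ, ζ) = F (ξ, η, ζ) ∧ F (ξ, ζ, η) = F (ξ, η, ζ))
    (hGperm : ∀ ξ η ζ : ℝ≥0, G (η, ξ, ζ) = G (ξ, η, ζ) ∧ G (ξ, ζ, η) = G (ξ, η, ζ))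
    (hG1 : ∀ ξ η ζ : ℝ≥0, ξ ≤ G (ξ, η, ζ))
    (hFG : ∀ ξ η ζ : ℝ≥0, G (ξ, η, ζ) ≤ F (ξ, η, ζ))
    (hG0 : G (0, 0, 0) = 0)
    (hGcont0 : ContinuousAt G (0, 0, 0))
    (hGmono : Monotone G)
    (T : X → X) (α : ℝ≥0) (hα : α < 1)
    (hT : ∀ x y z : X, x ≠ y → y ≠ z → x ≠ z →
      F (nndist (T x) (T y), nndist (T y) (T z), nndist (T x) (T z)) ≤
        α * G (nndist x y, nndist y z, nndist x z))
    (hFcont : Continuous F) (hGcont : Continuous G)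
    (k : ℝ≥0) (hk0 : 0 < k)
    (hk : ∀ ξ : ℝ≥0, G (ξ, ξ, 0) ≤ k * ξ)
    (hαk : α * k < 1)
    (x : X) (hacc : ∀ ε : ℝ, 0 < ε → (Metric.ball x ε).Infinite)
    :
    ∀ y : X, nndist (T x) (T y) ≤ α * k * nndist x y := by
  exact stmt5_general (fun ξ η ζ => (hG1 ξ η ζ).trans (hFG ξ η ζ))
    (fun _ => hGcont.continuousAt) hk hT hacc
end

section
/- Let (X,d) be a compact metric space with at least 3 points and let T : X → X be a mapping contracting perimeters of triangles in the sense of Edelstein which does not possess periodic points of prime period 2 (i.e., there is no x ∈ X with T(Tx)=x and Tx ≠ x). Then T has a fixed point. -/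
open scoped NNReal

/-!
At an accumulation point `x`, comparing the triangles `x, y, z` and `T x, T y, T z` and letting
`z → x` gives `dist (T x) (T y) ≤ dist x y`; hence `T` is continuous, isolated points being trivial.
The perimeter of the triangle `x, T x, T (T x)` is then a continuous function of `x`, and `T`
strictly decreases it at every `x` that is neither fixed nor of prime period 2, so on a compact
space a minimizer is a fixed point.
-/

open Filter Function Topology

section LyapunovFunction

variable {X α : Type*} [TopologicalSpace X] [CompactSpace X] [Nonempty X] [LinearOrder α]

theorem exists_isFixedPt_of_lowerSemicontinuous_of_map_lt {T : X → X} {φ : X → α}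
    (hφ : LowerSemicontinuous φ) (hlt : ∀ x, T x ≠ x → φ (T x) < φ x) :
    ∃ x, IsFixedPt T x := by
  obtain ⟨x, -, hx⟩ :=
    (hφ.lowerSemicontinuousOn Set.univ).exists_isMinOn Set.univ_nonempty isCompact_univ
  refine ⟨x, by_contra fun hne => ?_⟩
  exact (hlt x hne).not_ge (hx (Set.mem_univ (T x)))

end LyapunovFunction

/-- The perimeter of the possibly degenerate triangle with vertices `x`, `y`, `z`. -/
def trianglePerimeter {X : Type*} [Dist X] (x y z : X) : ℝ :=
  dist x y + dist y z + dist z x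

theorem two_mul_dist_le_trianglePerimeter {X : Type*} [PseudoMetricSpace X] (x y z : X) :
    2 * dist x y ≤ trianglePerimeter x y z := by
  have := dist_triangle_left x y z
  rw [dist_comm z y] at this
  unfold trianglePerimeter
  linarith

/-- Maps contracting perimeters of triangles in the sense of Edelstein: the perimeter of every
triangle with pairwise distinct vertices strictly decreases, without a uniform ratio. The image
triangle may be degenerate. -/
def ContractsTrianglePerimeters {X : Type*} [Dist X] (T : X → X) : Prop :=
  ∀ ⦃x y z : X⦄, x ≠ y → y ≠ z → x ≠ z →
    trianglePerimeter (T x) (T y) (T z) < trianglePerimeter x y z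

namespace ContractsTrianglePerimeters

variable {X : Type*} [MetricSpace X] {T : X → X}

theorem dist_map_le_of_neBot_nhdsNE (hT : ContractsTrianglePerimeters T) (x : X)
    [(𝓝[≠] x).NeBot] (y : X) : dist (T x) (T y) ≤ dist x y := by
  rcases eq_or_ne x y with rfl | hxy
  · simp only [dist_self, le_refl]
  have hbound : ∀ᶠ z in 𝓝[≠] x, 2 * dist (T x) (T y) ≤ trianglePerimeter x y z := by
    filter_upwards [self_mem_nhdsWithin, eventually_ne_nhdsWithin hxy] with z hzx hzy
    exact (two_mul_dist_le_trianglePerimeter _ _ _).trans (hT hxy hzy.symm (Ne.symm hzx)).le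
  have hlim : Tendsto (trianglePerimeter x y) (𝓝[≠] x) (𝓝 (trianglePerimeter x y x)) := by
    have : Continuous (trianglePerimeter x y) := by unfold trianglePerimeter; fun_prop
    exact this.continuousAt.mono_left nhdsWithin_le_nhds
  have hle : 2 * dist (T x) (T y) ≤ trianglePerimeter x y x := ge_of_tendsto hlim hbound
  simp only [trianglePerimeter, dist_self, dist_comm y x] at hle
  linarith

protected theorem continuous (hT : ContractsTrianglePerimeters T) : Continuous T := by
  refine continuous_iff_continuousAt.2 fun x => ?_
  rcases (𝓝[≠] x).eq_or_neBot with hisolated | hacc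
  · rw [continuousAt_iff_punctured_nhds, hisolated]
    exact tendsto_bot
  · refine continuousAt_of_locally_lipschitz one_pos 1 fun y _ => ?_
    simpa only [one_mul, dist_comm] using hT.dist_map_le_of_neBot_nhdsNE x y

theorem trianglePerimeter_orbit_map_lt (hT : ContractsTrianglePerimeters T) {x : X}
    (hx : T x ≠ x) (hx₂ : T (T x) ≠ x) :
    trianglePerimeter (T x) (T (T x)) (T (T (T x))) < trianglePerimeter x (T x) (T (T x)) := by
  rcases eq_or_ne (T (T x)) (T x) with hfix | hne
  · have hpos : 0 < dist x (T x) := dist_pos.2 hx.symm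
    calc
      trianglePerimeter (T x) (T (T x)) (T (T (T x))) = 0 := by
        simp only [trianglePerimeter, hfix, dist_self, add_zero]
      _ < 2 * dist x (T x) := by positivity
      _ ≤ trianglePerimeter x (T x) (T (T x)) := two_mul_dist_le_trianglePerimeter _ _ _
  · exact hT hx.symm hne.symm hx₂.symm

end ContractsTrianglePerimeters

theorem stmt10 {X : Type*} [MetricSpace X] [CompactSpace X]
    (hX : ∃ x y z : X, x ≠ y ∧ y ≠ z ∧ x ≠ z)
    (T : X → X)
    (hT : ∀ x y z : X, x ≠ y → y ≠ z → x ≠ z →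
      dist (T x) (T y) + dist (T y) (T z) + dist (T x) (T z) <
        dist x y + dist y z + dist z x)
    (hper : ¬ ∃ x : X, T (T x) = x ∧ T x ≠ x)
    :
    ∃ x : X, T x = x := by
  have : Nonempty X := hX.nonempty
  have hcontr : ContractsTrianglePerimeters T := fun x y z hxy hyz hxz => by
    simpa only [trianglePerimeter, dist_comm (T z)] using hT x y z hxy hyz hxz
  have hTcont : Continuous T := hcontr.continuous
  have hφ : Continuous fun x => trianglePerimeter x (T x) (T (T x)) := by
    unfold trianglePerimeter
    fun_prop
  exact exists_isFixedPt_of_lowerSemicontinuous_of_map_lt hφ.lowerSemicontinuous fun x hx =>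
    hcontr.trianglePerimeter_orbit_map_lt hx fun hx₂ => hper ⟨x, hx₂, hx⟩
end

section
/- Let (X,d) be a metric space with at least 3 points, let F,G : ℝ≥0 × ℝ≥0 × ℝ≥0 → ℝ≥0 satisfy the (F,G)-conditions, and let T : X → X be an (F,G)-contracting mapping with constant α ∈ [0,1) which does not possess periodic points of prime period 2. Fix x₀ ∈ X, define xₙ₊₁ = Txₙ for all n ≥ 0, and suppose no xₙ is a fixed point of T. Let p₀ = G(d(x₀,x₁), d(x₁,x₂), d(x₂,x₀)). Then all the points xₙ are pairwise distinct, and for all n ≥ 1 and p ≥ 1 one has d(xₙ, xₙ₊ₚ) ≤ p₀·αⁿ⁻¹/(1−α); in particular (xₙ) is a Cauchy sequence. -/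
open scoped NNReal

/-!
Let `φ y = G (d(y, Ty), d(Ty, T²y), d(T²y, y))`. Along the orbit any three consecutive points are
distinct, so the contraction condition gives `φ (Ty) ≤ α φ y` there, while `φ y ≥ d(y, Ty) > 0`.
Hence `φ` strictly decreases along the orbit, which therefore never revisits a point, and
consecutive distances are dominated by the geometric sequence `φ (x 0) * αⁿ`.
-/

theorem dist_add_le_of_dist_succ_le_geometric {X : Type*} [PseudoMetricSpace X] {x : ℕ → X}
    {C r : ℝ} (hr₀ : 0 ≤ r) (hr₁ : r < 1) (h : ∀ n, dist (x n) (x (n + 1)) ≤ C * r ^ n)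
    (n p : ℕ) : dist (x n) (x (n + p)) ≤ C * r ^ n / (1 - r) := by
  have hC : 0 ≤ C := by simpa using dist_nonneg.trans (h 0)
  calc dist (x n) (x (n + p))
      ≤ ∑ i ∈ Finset.Ico n (n + p), C * r ^ i :=
        dist_le_Ico_sum_of_dist_le (n.le_add_right p) fun _ _ => h _
    _ = C * ∑ i ∈ Finset.Ico n (n + p), r ^ i := (Finset.mul_sum _ _ _).symm
    _ ≤ C * (r ^ n / (1 - r)) :=
        mul_le_mul_of_nonneg_left (geom_sum_Ico_le_of_lt_one hr₀ hr₁) hC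
    _ = C * r ^ n / (1 - r) := (mul_div_assoc _ _ _).symm

/-- `T` shrinks the `G`-size of the mutual distances of any three distinct points by the factor `α`:
the case `F = G` of an `(F, G)`-contracting mapping. Since `G ≤ F`, every `(F, G)`-contracting
mapping has this property. -/
def ContractsTriangles {X : Type*} [PseudoMetricSpace X] (G : ℝ≥0 × ℝ≥0 × ℝ≥0 → ℝ≥0) (α : ℝ≥0)
    (T : X → X) : Prop :=
  ∀ x y z : X, x ≠ y → y ≠ z → x ≠ z →
    G (nndist (T x) (T y), nndist (T y) (T z), nndist (T x) (T z)) ≤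
      α * G (nndist x y, nndist y z, nndist x z)

/-- The `G`-size of the triangle `y, T y, T (T y)`, a function of `y` that plays the role of a
Lyapunov function for the orbits of `T`. -/
def orbitGauge {X : Type*} [PseudoMetricSpace X] (G : ℝ≥0 × ℝ≥0 × ℝ≥0 → ℝ≥0) (T : X → X)
    (y : X) : ℝ≥0 :=
  G (nndist y (T y), nndist (T y) (T (T y)), nndist (T (T y)) y)

section PseudoMetricSpace

variable {X : Type*} [PseudoMetricSpace X] {G : ℝ≥0 × ℝ≥0 × ℝ≥0 → ℝ≥0} {T : X → X} {α : ℝ≥0}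
  {x : ℕ → X}

theorem nndist_map_le_orbitGauge (hG : ∀ ξ η ζ : ℝ≥0, ξ ≤ G (ξ, η, ζ)) (y : X) :
    nndist y (T y) ≤ orbitGauge G T y :=
  hG _ _ _

theorem ContractsTriangles.orbitGauge_map_le (hT : ContractsTriangles G α T) {y : X}
    (hy : T y ≠ y) (hTy : T (T y) ≠ T y) (hTTy : T (T y) ≠ y) :
    orbitGauge G T (T y) ≤ α * orbitGauge G T y := by
  simpa only [orbitGauge, nndist_comm (T (T y)) y, nndist_comm (T (T (T y))) (T y)]
    using hT y (T y) (T (T y)) hy.symm hTy.symm hTTy.symm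

theorem ContractsTriangles.orbitGauge_succ_le (hT : ContractsTriangles G α T)
    (hper : ¬ ∃ y : X, T (T y) = y ∧ T y ≠ y) (hiter : ∀ n, x (n + 1) = T (x n))
    (hnofix : ∀ n, T (x n) ≠ x n) (n : ℕ) :
    orbitGauge G T (x (n + 1)) ≤ α * orbitGauge G T (x n) := by
  rw [hiter]
  exact hT.orbitGauge_map_le (hnofix n) (hiter n ▸ hnofix (n + 1))
    fun h => hper ⟨x n, h, hnofix n⟩

theorem dist_succ_le_geometric_of_orbitGauge_succ_le (hG : ∀ ξ η ζ : ℝ≥0, ξ ≤ G (ξ, η, ζ))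
    (hiter : ∀ n, x (n + 1) = T (x n))
    (hstep : ∀ n, orbitGauge G T (x (n + 1)) ≤ α * orbitGauge G T (x n)) (n : ℕ) :
    dist (x n) (x (n + 1)) ≤ orbitGauge G T (x 0) * (α : ℝ) ^ n :=
  calc dist (x n) (x (n + 1))
      ≤ orbitGauge G T (x n) := by
        rw [hiter]
        exact nndist_map_le_orbitGauge hG (x n)
    _ ≤ (α : ℝ) ^ n * orbitGauge G T (x 0) :=
        le_geom (u := fun k => (orbitGauge G T (x k) : ℝ)) α.coe_nonneg n
          fun k _ => mod_cast hstep k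
    _ = orbitGauge G T (x 0) * (α : ℝ) ^ n := mul_comm _ _

end PseudoMetricSpace

section MetricSpace

variable {X : Type*} [MetricSpace X] {G : ℝ≥0 × ℝ≥0 × ℝ≥0 → ℝ≥0} {T : X → X} {α : ℝ≥0}
  {x : ℕ → X}

theorem orbitGauge_pos (hG : ∀ ξ η ζ : ℝ≥0, ξ ≤ G (ξ, η, ζ)) {y : X} (hy : T y ≠ y) :
    0 < orbitGauge G T y :=
  (pos_iff_ne_zero.2 (nndist_eq_zero.not.2 hy.symm)).trans_le (nndist_map_le_orbitGauge hG y)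

theorem injective_of_orbitGauge_succ_le (hG : ∀ ξ η ζ : ℝ≥0, ξ ≤ G (ξ, η, ζ)) (hα : α < 1)
    (hnofix : ∀ n, T (x n) ≠ x n)
    (hstep : ∀ n, orbitGauge G T (x (n + 1)) ≤ α * orbitGauge G T (x n)) :
    Function.Injective x := by
  have hanti : StrictAnti (orbitGauge G T ∘ x) := strictAnti_nat_of_succ_lt fun n =>
    (hstep n).trans_lt (mul_lt_of_lt_one_left (orbitGauge_pos hG (hnofix n)) hα)
  exact hanti.injective.of_comp

theorem stmt15_general (hG : ∀ ξ η ζ : ℝ≥0, ξ ≤ G (ξ, η, ζ)) (hα : α < 1)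
    (hT : ContractsTriangles G α T) (hper : ¬ ∃ y : X, T (T y) = y ∧ T y ≠ y)
    (hiter : ∀ n, x (n + 1) = T (x n)) (hnofix : ∀ n, T (x n) ≠ x n) :
    Function.Injective x ∧
    (∀ n p : ℕ, nndist (x n) (x (n + p)) ≤
      G (nndist (x 0) (x 1), nndist (x 1) (x 2), nndist (x 2) (x 0)) * α ^ n / (1 - α)) ∧
    CauchySeq x := by
  have hstep := hT.orbitGauge_succ_le hper hiter hnofix
  have hdist := dist_succ_le_geometric_of_orbitGauge_succ_le hG hiter hstep
  have hgauge : G (nndist (x 0) (x 1), nndist (x 1) (x 2), nndist (x 2) (x 0)) =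
      orbitGauge G T (x 0) := by
    simp only [orbitGauge, hiter 1, hiter 0]
  refine ⟨injective_of_orbitGauge_succ_le hG hα hnofix hstep, fun n p => ?_,
    cauchySeq_of_le_geometric _ _ (mod_cast hα) hdist⟩
  rw [hgauge, ← NNReal.coe_le_coe]
  simpa [NNReal.coe_sub hα.le] using
    dist_add_le_of_dist_succ_le_geometric α.coe_nonneg (mod_cast hα) hdist n p

end MetricSpace

theorem stmt15 {X : Type*} [MetricSpace X]
    (hX : ∃ x y z : X, x ≠ y ∧ y ≠ z ∧ x ≠ z)
    (F G : ℝ≥0 × ℝ≥0 × ℝ≥0 → ℝ≥0)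
    (hFperm : ∀ ξ η ζ : ℝ≥0, F (η, ξ, ζ) = F (ξ, η, ζ) ∧ F (ξ, ζ, η) = F (ξ, η, ζ))
    (hGperm : ∀ ξ η ζ : ℝ≥0, G (η, ξ, ζ) = G (ξ, η, ζ) ∧ G (ξ, ζ, η) = G (ξ, η, ζ))
    (hG1 : ∀ ξ η ζ : ℝ≥0, ξ ≤ G (ξ, η, ζ))
    (hFG : ∀ ξ η ζ : ℝ≥0, G (ξ, η, ζ) ≤ F (ξ, η, ζ))
    (hG0 : G (0, 0, 0) = 0)
    (hGcont0 : ContinuousAt G (0, 0, 0))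
    (hGmono : Monotone G)
    (T : X → X) (α : ℝ≥0) (hα : α < 1)
    (hT : ∀ x y z : X, x ≠ y → y ≠ z → x ≠ z →
      F (nndist (T x) (T y), nndist (T y) (T z), nndist (T x) (T z)) ≤
        α * G (nndist x y, nndist y z, nndist x z))
    (hper : ¬ ∃ x : X, T (T x) = x ∧ T x ≠ x)
    (x₀ : X) (x : ℕ → X) (hx₀ : x 0 = x₀)
    (hiter : ∀ n : ℕ, x (n + 1) = T (x n))
    (hnofix : ∀ n : ℕ, T (x n) ≠ x n)
    :
    (∀ m n : ℕ, m ≠ n → x m ≠ x n) ∧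
    (∀ n p : ℕ, 1 ≤ n → 1 ≤ p →
      nndist (x n) (x (n + p)) ≤
        G (nndist (x 0) (x 1), nndist (x 1) (x 2), nndist (x 2) (x 0)) * α ^ (n - 1) / (1 - α)) ∧
    CauchySeq x := by
  obtain ⟨hinj, hbound, hcauchy⟩ := stmt15_general hG1 hα
    (fun x y z hxy hyz hxz => (hFG _ _ _).trans (hT x y z hxy hyz hxz)) hper hiter hnofix
  refine ⟨fun m n => hinj.ne, fun n p _ _ => (hbound n p).trans ?_, hcauchy⟩
  gcongr _ * ?_ / _
  exact pow_le_pow_of_le_one zero_le hα.le (n.sub_le 1)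
end
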